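/- Let p be a prime and let 1 ≤ w ≤ v−2 and 0 ≤ ℓ ≤ m be integers. Set B = ℤ/p^vℤ ⊕ ℤ/p^wℤ and let A be the cyclic subgroup of B generated by (p^{v−2}, p^{w−1}). Then the number of group homomorphisms f : B → ℤ/p^mℤ with f(A) ⊆ p^{m−ℓ}(ℤ/p^mℤ) equals: p^{min{v−1,m} + min{w−1,m}} if ℓ = 0; p^{min{v−1,m} + min{w,m}} if ℓ = 1; and p^{min{v,m} + min{w,m}} if ℓ ≥ 2. -/

import Mathlib

lemma aux_mem (p : ℕ) (hp : p.Prime) (l m : ℕ) (hlm : l ≤ m) (z : ZMod (p ^ m)) :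
    z ∈ AddSubgroup.zmultiples ((p : ZMod (p ^ m)) ^ (m - l)) ↔ (p : ZMod (p ^ m)) ^ l * z = 0 := by
  have hpm : (p : ZMod (p ^ m)) ^ l * (p : ZMod (p ^ m)) ^ (m - l) = 0 := by
    rw [← pow_add, Nat.add_sub_cancel' hlm]
    exact_mod_cast ZMod.natCast_self (p ^ m)
  constructor
  · rintro ⟨k, rfl⟩
    simp only [zsmul_eq_mul]
    linear_combination (k : ZMod (p ^ m)) * hpm
  · intro h
    obtain ⟨a, rfl⟩ := ZMod.intCast_surjective z
    have h' : (((p : ℤ) ^ l * a : ℤ) : ZMod (p ^ m)) = 0 := by push_cast; exact h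
    rw [ZMod.intCast_zmod_eq_zero_iff_dvd] at h'
    have hp0 : (p : ℤ) ≠ 0 := by exact_mod_cast hp.ne_zero
    have h3 : (p : ℤ) ^ (m - l) ∣ a := by
      have : (p : ℤ) ^ l * (p : ℤ) ^ (m - l) ∣ (p : ℤ) ^ l * a := by
        rw [← pow_add, Nat.add_sub_cancel' hlm]; exact_mod_cast h'
      exact (mul_dvd_mul_iff_left (pow_ne_zero _ hp0)).1 this
    obtain ⟨c, rfl⟩ := h3
    refine ⟨c, ?_⟩
    simp only [zsmul_eq_mul]
    push_cast
    ring

lemma aux_card (p : ℕ) (hp : p.Prime) (k m : ℕ) :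
    Nat.card {z : ZMod (p ^ m) // (p : ZMod (p ^ m)) ^ k * z = 0} = p ^ (min k m) := by
  rcases le_total k m with h | h
  · rw [min_eq_left h]
    have e : Nat.card {z : ZMod (p ^ m) // (p : ZMod (p ^ m)) ^ k * z = 0} =
        Nat.card (AddSubgroup.zmultiples ((p : ZMod (p ^ m)) ^ (m - k))) :=
      Nat.card_congr (Equiv.subtypeEquivRight fun z => (aux_mem p hp k m h z).symm)
    rw [e, Nat.card_zmultiples, ← Nat.cast_pow, ZMod.addOrderOf_coe _ (pow_ne_zero _ hp.ne_zero),
      Nat.gcd_eq_right (pow_dvd_pow p (Nat.sub_le m k)), Nat.pow_div (Nat.sub_le m k) hp.pos]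
    congr 1; omega
  · rw [min_eq_right h]
    have h0 : (p : ZMod (p ^ m)) ^ k = 0 := by
      rw [← Nat.cast_pow, ZMod.natCast_eq_zero_iff]
      exact pow_dvd_pow p h
    have e : Nat.card {z : ZMod (p ^ m) // (p : ZMod (p ^ m)) ^ k * z = 0} =
        Nat.card (ZMod (p ^ m)) :=
      Nat.card_congr (Equiv.subtypeUnivEquiv fun z => by rw [h0, zero_mul])
    rw [e, Nat.card_zmod]

lemma aux_prod (p : ℕ) (hp : p.Prime) (j k m : ℕ) :
    Nat.card {z : ZMod (p ^ m) × ZMod (p ^ m) //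
      (p : ZMod (p ^ m)) ^ j * z.1 = 0 ∧ (p : ZMod (p ^ m)) ^ k * z.2 = 0} =
      p ^ (min j m + min k m) := by
  rw [pow_add, ← aux_card p hp j m, ← aux_card p hp k m, ← Nat.card_prod]
  exact Nat.card_congr (Equiv.subtypeProdEquivProd
    (p := fun z => (p : ZMod (p ^ m)) ^ j * z = 0) (q := fun z => (p : ZMod (p ^ m)) ^ k * z = 0))

lemma aux_hom (p : ℕ) (hp : p.Prime) (v w l m : ℕ) (hlm : l ≤ m) (i j : ℕ) :
    Nat.card {f : (ZMod (p ^ v) × ZMod (p ^ w)) →+ ZMod (p ^ m) //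
        ∀ a ∈ AddSubgroup.zmultiples ((p : ZMod (p ^ v)) ^ i, (p : ZMod (p ^ w)) ^ j),
          f a ∈ AddSubgroup.zmultiples ((p : ZMod (p ^ m)) ^ (m - l))} =
    Nat.card {z : ZMod (p ^ m) × ZMod (p ^ m) //
      ((p : ZMod (p ^ m)) ^ v * z.1 = 0 ∧ (p : ZMod (p ^ m)) ^ w * z.2 = 0) ∧
      (p : ZMod (p ^ m)) ^ l *
        ((p : ZMod (p ^ m)) ^ i * z.1 + (p : ZMod (p ^ m)) ^ j * z.2) = 0} := by
  have key : ∀ (f : (ZMod (p ^ v) × ZMod (p ^ w)) →+ ZMod (p ^ m)) (a b : ℕ),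
      f ((a : ZMod (p ^ v)), (b : ZMod (p ^ w))) = a * f (1, 0) + b * f (0, 1) := by
    intro f a b
    rw [← nsmul_eq_mul, ← nsmul_eq_mul, ← map_nsmul, ← map_nsmul, ← map_add]
    simp
  have cond : ∀ (f : (ZMod (p ^ v) × ZMod (p ^ w)) →+ ZMod (p ^ m)),
      (∀ a ∈ AddSubgroup.zmultiples ((p : ZMod (p ^ v)) ^ i, (p : ZMod (p ^ w)) ^ j),
          f a ∈ AddSubgroup.zmultiples ((p : ZMod (p ^ m)) ^ (m - l))) ↔
      (p : ZMod (p ^ m)) ^ l *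
        ((p : ZMod (p ^ m)) ^ i * f (1, 0) + (p : ZMod (p ^ m)) ^ j * f (0, 1)) = 0 := by
    intro f
    have hk := key f (p ^ i) (p ^ j)
    push_cast at hk
    rw [← hk, ← aux_mem p hp l m hlm]
    constructor
    · intro h
      exact h _ (AddSubgroup.mem_zmultiples _)
    · rintro h _ ⟨c, rfl⟩
      simp only [map_zsmul]
      exact AddSubgroup.zsmul_mem _ h c
  refine Nat.card_congr (Equiv.ofBijective (fun f => ⟨(f.1 (1, 0), f.1 (0, 1)), ⟨?_, ?_⟩,
    (cond f.1).1 f.2⟩) ⟨?_, ?_⟩)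
  · have := key f.1 (p ^ v) 0
    rw [ZMod.natCast_self] at this
    push_cast at this
    rw [← Prod.zero_eq_mk, map_zero] at this
    simpa using this.symm
  · have := key f.1 0 (p ^ w)
    rw [ZMod.natCast_self] at this
    push_cast at this
    rw [← Prod.zero_eq_mk, map_zero] at this
    simpa using this.symm
  · rintro ⟨f, hf⟩ ⟨g, hg⟩ h
    simp only [Subtype.mk.injEq, Prod.mk.injEq] at h
    apply Subtype.ext
    apply AddMonoidHom.ext
    rintro ⟨a, b⟩
    have : NeZero (p ^ v) := ⟨pow_ne_zero _ hp.ne_zero⟩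
    have : NeZero (p ^ w) := ⟨pow_ne_zero _ hp.ne_zero⟩
    obtain ⟨a, rfl⟩ := ZMod.natCast_zmod_surjective a
    obtain ⟨b, rfl⟩ := ZMod.natCast_zmod_surjective b
    change f _ = g _
    rw [key f, key g, h.1, h.2]
  · rintro ⟨⟨x, y⟩, ⟨hx, hy⟩, hxy⟩
    let F : ZMod (p ^ v) →+ ZMod (p ^ m) := ZMod.lift _ ⟨zmultiplesHom _ x, by simpa using hx⟩
    let G : ZMod (p ^ w) →+ ZMod (p ^ m) := ZMod.lift _ ⟨zmultiplesHom _ y, by simpa using hy⟩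
    have hF : F 1 = x := by
      have := ZMod.lift_coe (p ^ v) ⟨zmultiplesHom _ x, by simpa using hx⟩ 1
      simpa using this
    have hG : G 1 = y := by
      have := ZMod.lift_coe (p ^ w) ⟨zmultiplesHom _ y, by simpa using hy⟩ 1
      simpa using this
    refine ⟨⟨F.coprod G, (cond _).2 ?_⟩, ?_⟩
    · simpa [hF, hG] using hxy
    · simp [hF, hG]

/-- The number of morphisms of pairs from the bipicket `T_2^{v,w}` to the picket `P_ℓ^m`,
i.e. homomorphisms `f : ℤ/p^v ⊕ ℤ/p^w → ℤ/p^m` with `f(⟨(p^{v-2}, p^{w-1})⟩) ⊆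
p^{m-ℓ}(ℤ/p^m)`. -/
theorem stmt_6 (p : ℕ) (hp : p.Prime) (v w ℓ m : ℕ) (h1 : 1 ≤ w) (h2 : w + 2 ≤ v)
    (hlm : ℓ ≤ m) :
    Nat.card {f : (ZMod (p ^ v) × ZMod (p ^ w)) →+ ZMod (p ^ m) //
        ∀ a ∈ AddSubgroup.zmultiples ((p : ZMod (p ^ v)) ^ (v - 2), (p : ZMod (p ^ w)) ^ (w - 1)),
          f a ∈ AddSubgroup.zmultiples ((p : ZMod (p ^ m)) ^ (m - ℓ))} =
      if ℓ = 0 then p ^ (min (v - 1) m + min (w - 1) m)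
      else if ℓ = 1 then p ^ (min (v - 1) m + min w m)
      else p ^ (min v m + min w m) := by
  rw [aux_hom p hp v w ℓ m hlm]
  obtain ⟨u, rfl⟩ := Nat.exists_eq_add_of_le' h1
  obtain ⟨d, rfl⟩ := Nat.exists_eq_add_of_le h2
  have e1 : u + 1 + 2 + d - 2 = u + 1 + d := by omega
  have e2 : u + 1 + 2 + d - 1 = u + 2 + d := by omega
  rw [e1, e2, Nat.add_sub_cancel]
  generalize hq : (p : ZMod (p ^ m)) = q
  split_ifs with c0 c1
  · subst c0
    rw [← aux_prod p hp, hq]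
    refine Nat.card_congr
      { toFun := fun z => ⟨(z.1.1, z.1.2 + q ^ (d + 1) * z.1.1), ?_, ?_⟩
        invFun := fun z => ⟨(z.1.1, z.1.2 - q ^ (d + 1) * z.1.1), ⟨?_, ?_⟩, ?_⟩
        left_inv := fun z => by ext <;> simp
        right_inv := fun z => by ext <;> simp }
    · obtain ⟨⟨x, y⟩, ⟨hx, hy⟩, h⟩ := z
      simp only at *
      linear_combination q * h - hy
    · obtain ⟨⟨x, y⟩, ⟨hx, hy⟩, h⟩ := z
      simp only at *
      linear_combination h
    · obtain ⟨⟨x, y⟩, hx, hy⟩ := z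
      simp only at *
      linear_combination q * hx
    · obtain ⟨⟨x, y⟩, hx, hy⟩ := z
      simp only at *
      linear_combination q * hy - hx
    · obtain ⟨⟨x, y⟩, hx, hy⟩ := z
      simp only at *
      linear_combination hy
  · subst c1
    rw [← aux_prod p hp, hq]
    refine Nat.card_congr (Equiv.subtypeEquivRight ?_)
    rintro ⟨x, y⟩
    simp only
    constructor
    · rintro ⟨⟨hx, hy⟩, h⟩
      exact ⟨by linear_combination h - hy, hy⟩
    · rintro ⟨hx, hy⟩
      exact ⟨⟨by linear_combination q * hx, hy⟩, by linear_combination hx + hy⟩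
  · obtain ⟨k, rfl⟩ := Nat.exists_eq_add_of_le' (show 2 ≤ ℓ by omega)
    rw [← aux_prod p hp, hq]
    refine Nat.card_congr (Equiv.subtypeEquivRight ?_)
    rintro ⟨x, y⟩
    simp only
    constructor
    · rintro ⟨h, _⟩
      exact h
    · rintro ⟨hx, hy⟩
      exact ⟨⟨hx, hy⟩, by linear_combination q ^ k * hx + q ^ (k + 1) * hy⟩
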